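/- arXiv:2402.04713 — 4 statements merged into one kernel-verified Lean document; each statement's English description precedes it below -/
import Mathlib

section
/- Let x_1, …, x_{l+1} be points in ℝ^d with step values r_i = ‖x_i − x_{l+1}‖₂ − ‖x_{i+1} − x_{l+1}‖₂, and suppose the path is b-monotonic. Let r₊ > 0 and r₋ ≥ 0 be such that every nonnegative step satisfies r_i ≥ r₊ and every negative step satisfies |r_i| ≤ r₋, and let R̄ ≥ 0 satisfy ‖x_1 − x_{l+1}‖₂ ≤ R̄. Then the number of hops satisfies l ≤ R̄/r₊ + b·(1 + r₋/r₊). -/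
/-!
The step values telescope to the initial distance `‖x 0 - x l‖ ≤ R`. On the other hand each
of the `l` steps contributes at least `r₊`, except that each of the `b` negative ones
contributes at least `-r₋ = r₊ - (r₊ + r₋)`. Hence `l r₊ - b (r₊ + r₋) ≤ R`; divide by `r₊`.
-/

/-- Hop-count bound for a `b`-monotonic path: if every nonnegative step value
is at least `r₊ > 0`, every negative step value has magnitude at most
`r₋ ≥ 0`, and `‖x 0 - x l‖ ≤ R̄`, then `l ≤ R̄/r₊ + b·(1 + r₋/r₊)`. -/
theorem b_monotonic_hop_bound
    {d l b : ℕ} (x : Fin (l + 1) → EuclideanSpace ℝ (Fin d))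
    (r : Fin l → ℝ)
    (hr : ∀ i : Fin l,
      r i = ‖x i.castSucc - x (Fin.last l)‖ - ‖x i.succ - x (Fin.last l)‖)
    (hb : (Finset.univ.filter (fun i : Fin l => r i < 0)).card = b)
    (rp rm R : ℝ) (hrp : 0 < rp) (hrm : 0 ≤ rm) (hR : 0 ≤ R)
    (hplus : ∀ i : Fin l, 0 ≤ r i → rp ≤ r i)
    (hminus : ∀ i : Fin l, r i < 0 → |r i| ≤ rm)
    (hRbound : ‖x 0 - x (Fin.last l)‖ ≤ R) :
    (l : ℝ) ≤ R / rp + (b : ℝ) * (1 + rm / rp) := by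
  -- The step values telescope, since the distance from the endpoint to itself is zero.
  have htel : ∑ i, r i = ‖x 0 - x (Fin.last l)‖ := by
    have h1 := Fin.sum_univ_castSucc (fun i => ‖x i - x (Fin.last l)‖)
    have h2 := Fin.sum_univ_succ (fun i => ‖x i - x (Fin.last l)‖)
    simp only [sub_self, norm_zero] at h1
    simp only [hr, Finset.sum_sub_distrib]
    linarith
  have hlow : ∀ i, rp - (if r i < 0 then rp + rm else 0) ≤ r i := by
    intro i
    split_ifs with h
    · linarith [(abs_le.mp (hminus i h)).1]
    · linarith [hplus i (not_lt.mp h)]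
  have hsum : (l : ℝ) * rp - b * (rp + rm) ≤ ∑ i, r i := by
    calc (l : ℝ) * rp - b * (rp + rm)
        = ∑ i, (rp - (if r i < 0 then rp + rm else 0)) := by
          rw [Finset.sum_sub_distrib, ← Finset.sum_filter, Finset.sum_const,
            Finset.sum_const, hb, Finset.card_univ, Fintype.card_fin, nsmul_eq_mul,
            nsmul_eq_mul]
      _ ≤ ∑ i, r i := Finset.sum_le_sum fun i _ => hlow i
  have heq : R / rp + (b : ℝ) * (1 + rm / rp) = (R + b * (rp + rm)) / rp := by
    field_simp
  rw [heq, le_div_iff₀ hrp]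
  linarith
end

section
/- Let x_1, …, x_{l+1} be points in ℝ^d with step values r_i = ‖x_i − x_{l+1}‖₂ − ‖x_{i+1} − x_{l+1}‖₂, and suppose the path is b-monotonic with b ≤ B for a natural number B. Let r₊ > 0 and r₋ ≥ 0 be such that every nonnegative step satisfies r_i ≥ r₊ and every negative step satisfies |r_i| ≤ r₋, and let R̄ ≥ 0 satisfy ‖x_1 − x_{l+1}‖₂ ≤ R̄. Then l ≤ R̄/r₊ + B·(1 + r₋/r₊), a bound depending only on R̄, r₊, r₋, B and not on the individual path. -/
/-!
The step values telescope to `‖x 0 - x (last l)‖ ≤ R`. Each step is at least `rp`, except that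
each of the `b` negative steps falls short of `rp` by at most `rp + rm`; summing gives
`l * rp - b * (rp + rm) ≤ R`, and dividing by `rp` and using `b ≤ B` yields the bound.
-/

/-- Uniform hop-count bound: for a `b`-monotonic path with `b ≤ B`, if every
nonnegative step value is at least `r₊ > 0`, every negative step value has
magnitude at most `r₋ ≥ 0`, and `‖x 0 - x l‖ ≤ R̄`, then
`l ≤ R̄/r₊ + B·(1 + r₋/r₊)`, a bound depending only on `R̄, r₊, r₋, B`. -/
theorem b_monotonic_hop_bound_uniform
    {d l b : ℕ} (B : ℕ) (x : Fin (l + 1) → EuclideanSpace ℝ (Fin d))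
    (r : Fin l → ℝ)
    (hr : ∀ i : Fin l,
      r i = ‖x i.castSucc - x (Fin.last l)‖ - ‖x i.succ - x (Fin.last l)‖)
    (hb : (Finset.univ.filter (fun i : Fin l => r i < 0)).card = b)
    (hbB : b ≤ B)
    (rp rm R : ℝ) (hrp : 0 < rp) (hrm : 0 ≤ rm) (hR : 0 ≤ R)
    (hplus : ∀ i : Fin l, 0 ≤ r i → rp ≤ r i)
    (hminus : ∀ i : Fin l, r i < 0 → |r i| ≤ rm)
    (hRbound : ‖x 0 - x (Fin.last l)‖ ≤ R) :
    (l : ℝ) ≤ R / rp + (B : ℝ) * (1 + rm / rp) := by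
  have htel : ∑ i, r i = ‖x 0 - x (Fin.last l)‖ := by
    -- Two splittings of the sum of all distances to the target: first term off, last term off.
    have h1 := Fin.sum_univ_succ (fun j : Fin (l + 1) => ‖x j - x (Fin.last l)‖)
    have h2 := Fin.sum_univ_castSucc (fun j : Fin (l + 1) => ‖x j - x (Fin.last l)‖)
    simp only [sub_self, norm_zero, add_zero] at h2
    simp only [hr, Finset.sum_sub_distrib]
    linarith
  have hstep : ∀ i, rp - (if r i < 0 then rp + rm else 0) ≤ r i := by
    intro i
    split_ifs with h
    · linarith [neg_abs_le (r i), hminus i h]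
    · linarith [hplus i (not_lt.mp h)]
  have hsum := Finset.sum_le_sum (fun i (_ : i ∈ Finset.univ) => hstep i)
  rw [Finset.sum_sub_distrib, ← Finset.sum_filter, Finset.sum_const, Finset.sum_const, hb, htel,
    Finset.card_univ, Fintype.card_fin, nsmul_eq_mul, nsmul_eq_mul] at hsum
  have hB : (b : ℝ) * (rp + rm) ≤ B * (rp + rm) := by gcongr
  have heq : R / rp + (B : ℝ) * (1 + rm / rp) = (R + B * (rp + rm)) / rp := by
    field_simp
  rw [heq, le_div_iff₀ hrp]
  linarith
end

section
/- Let X ⊂ ℝ^d be a finite database, D = {d_1, …, d_K} ⊂ X a finite set of sites, U ⊆ ℝ^d a set containing X and the query q, and let U_j = {y ∈ U : d_j is the unique nearest site in D to y} be the Voronoi cell of d_j, with d_j ∈ U_j. Let GT(q) ∈ X be a nearest point of X to q, and suppose q ∈ U_j and GT(q) ∈ U_j (condition (i)). Let x_1 = d_j, x_2, …, x_{l+1} = GT(q) be a b-monotonic path with b ≤ B whose step values satisfy: every nonnegative step is at least r̄₊ⱼ and every negative step has magnitude at most r̄₋ⱼ. Suppose the diameter of U_j is at most R̄_j, the diameter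 of U is at most R̄, and 0 < r̄₊ ≤ r̄₊ⱼ, 0 ≤ r̄₋ⱼ ≤ r̄₋, R̄_j ≤ R̄. Then the number of hops satisfies l ≤ R̄_j/r̄₊ⱼ + B·(1 + r̄₋ⱼ/r̄₊ⱼ) ≤ R̄/r̄₊ + B·(1 + r̄₋/r̄₊); i.e., the hop bound l̄ for the adaptively selected entry point d_j is at most the bound l̄₀ for the fixed central entry point. -/
/-!
The step values telescope, so their sum is `‖dj - GT‖`, which is at most `Rj` because both
endpoints lie in the cell `Uj`. Every step value is at least `rpj`, except that each of the `b`
negative ones may fall short of `rpj` by up to `rpj + rmj`. Summing,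
`l * rpj - b * (rpj + rmj) ≤ Rj`, and dividing by `rpj` gives the hop bound. The comparison of the
two bounds is monotonicity of division; it uses `0 ≤ Rj`, which holds since the cell is nonempty.
-/

/-- Telescoping along a path indexed by `Fin (l + 1)`. -/
lemma sum_castSucc_sub_succ {l : ℕ} (f : Fin (l + 1) → ℝ) :
    ∑ i : Fin l, (f i.castSucc - f i.succ) = f 0 - f (Fin.last l) := by
  have h := (Fin.sum_univ_castSucc f).symm.trans (Fin.sum_univ_succ f)
  rw [Finset.sum_sub_distrib]
  linarith

/-- **Theorem 4.5, case (i).** Let `X` be a finite database in `ℝ^d`,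
`D ⊆ X` a finite set of sites, `U` a region containing `X` and the query `q`,
and `Uj` the Voronoi cell of the site `dj` (points of `U` whose unique nearest
site in `D` is `dj`), with `dj ∈ Uj`. Let `GT` be a nearest point of `X` to
`q`, and suppose `q ∈ Uj` and `GT ∈ Uj`. If `x 0 = dj, …, x l = GT` is a
`b`-monotonic path with `b ≤ B` whose nonnegative step values are at least
`r̄₊ⱼ` and whose negative step values have magnitude at most `r̄₋ⱼ`, the
diameter of `Uj` is at most `R̄_j`, the diameter of `U` is at most `R̄`, and
`0 < r̄₊ ≤ r̄₊ⱼ`, `0 ≤ r̄₋ⱼ ≤ r̄₋`, `R̄_j ≤ R̄`, then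
`l ≤ R̄_j/r̄₊ⱼ + B·(1 + r̄₋ⱼ/r̄₊ⱼ) ≤ R̄/r̄₊ + B·(1 + r̄₋/r̄₊)`. -/
theorem adaptive_entry_point_case_i
    {d l b : ℕ} (B : ℕ)
    (X D : Finset (EuclideanSpace ℝ (Fin d))) (hDX : D ⊆ X)
    (U : Set (EuclideanSpace ℝ (Fin d))) (hXU : ↑X ⊆ U)
    (q : EuclideanSpace ℝ (Fin d)) (hqU : q ∈ U)
    (dj : EuclideanSpace ℝ (Fin d)) (hdjD : dj ∈ D)
    (Uj : Set (EuclideanSpace ℝ (Fin d)))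
    (hUj : Uj = {y ∈ U | ∀ e ∈ D, e ≠ dj → ‖y - dj‖ < ‖y - e‖})
    (hdjUj : dj ∈ Uj)
    (GT : EuclideanSpace ℝ (Fin d)) (hGTX : GT ∈ X)
    (hGT : ∀ y ∈ X, ‖q - GT‖ ≤ ‖q - y‖)
    (hqUj : q ∈ Uj) (hGTUj : GT ∈ Uj)
    (x : Fin (l + 1) → EuclideanSpace ℝ (Fin d))
    (hx0 : x 0 = dj) (hxl : x (Fin.last l) = GT)
    (r : Fin l → ℝ)
    (hr : ∀ i : Fin l,
      r i = ‖x i.castSucc - x (Fin.last l)‖ - ‖x i.succ - x (Fin.last l)‖)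
    (hb : (Finset.univ.filter (fun i : Fin l => r i < 0)).card = b)
    (hbB : b ≤ B)
    (rpj rmj rp rm Rj R : ℝ)
    (hplus : ∀ i : Fin l, 0 ≤ r i → rpj ≤ r i)
    (hminus : ∀ i : Fin l, r i < 0 → |r i| ≤ rmj)
    (hdiamUj : ∀ y ∈ Uj, ∀ z ∈ Uj, ‖y - z‖ ≤ Rj)
    (hdiamU : ∀ y ∈ U, ∀ z ∈ U, ‖y - z‖ ≤ R)
    (hrp : 0 < rp) (hrppj : rp ≤ rpj)
    (hrmj : 0 ≤ rmj) (hrmjm : rmj ≤ rm)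
    (hRjR : Rj ≤ R) :
    (l : ℝ) ≤ Rj / rpj + (B : ℝ) * (1 + rmj / rpj) ∧
    Rj / rpj + (B : ℝ) * (1 + rmj / rpj) ≤ R / rp + (B : ℝ) * (1 + rm / rp) := by
  have hrpj : 0 < rpj := hrp.trans_le hrppj
  have hRj : 0 ≤ Rj := (norm_nonneg _).trans (hdiamUj dj hdjUj dj hdjUj)
  have hsum : ∑ i, r i = ‖dj - GT‖ := by
    have h := sum_castSucc_sub_succ (fun i => ‖x i - x (Fin.last l)‖)
    simp only [hr]
    simpa [hx0, hxl] using h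
  have hstep : ∀ i : Fin l, rpj - (if r i < 0 then rpj + rmj else 0) ≤ r i := by
    intro i
    split_ifs with h
    · have := hminus i h
      rw [abs_of_neg h] at this
      linarith
    · simpa using hplus i (not_lt.mp h)
  have hlow : (l : ℝ) * rpj - b * (rpj + rmj) ≤ ∑ i, r i := by
    refine le_trans (le_of_eq ?_) (Finset.sum_le_sum fun i _ => hstep i)
    rw [Finset.sum_sub_distrib, ← Finset.sum_filter, Finset.sum_const, Finset.sum_const, hb]
    simp [mul_add]
  have hdist : ‖dj - GT‖ ≤ Rj := hdiamUj dj hdjUj GT hGTUj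
  have hbB' : (b : ℝ) * (rpj + rmj) ≤ B * (rpj + rmj) := by gcongr
  constructor
  · have heq : Rj / rpj + (B : ℝ) * (1 + rmj / rpj) = (Rj + B * (rpj + rmj)) / rpj := by
      field_simp
    rw [heq, le_div_iff₀ hrpj]
    linarith
  · have hR : 0 ≤ R := hRj.trans hRjR
    have hrm : 0 ≤ rm := hrmj.trans hrmjm
    gcongr
end

section
/- Let x_1, …, x_{l+1} be points in ℝ^d forming a b-monotonic path with b ≤ B, whose step values r_i = ‖x_i − x_{l+1}‖₂ − ‖x_{i+1} − x_{l+1}‖₂ satisfy: every nonnegative step is at least r̄₊ > 0 and every negative step has magnitude at most r̄₋ ≥ 0. Suppose x_1 and a point q both lie in a set of diameter at most R̄_j, and let Δ = ‖q − x_{l+1}‖₂. Then the number of hops satisfies l ≤ (R̄_j + Δ)/r̄₊ + B·(1 + r̄₋/r̄₊). -/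
/-!
The step values telescope to `‖x 0 - x l‖`, which is at most `R̄_j + Δ` by the triangle inequality
through `q`. Each step value is at least `r̄₊`, except for the `b` negative ones, which are at least
`-r̄₋ = r̄₊ - (r̄₊ + r̄₋)`; hence `l r̄₊ - b (r̄₊ + r̄₋) ≤ R̄_j + Δ`, and dividing by `r̄₊` and using
`b ≤ B` gives the bound.
-/

theorem sum_fin_castSucc_sub_succ (l : ℕ) (f : Fin (l + 1) → ℝ) :
    ∑ i : Fin l, (f i.castSucc - f i.succ) = f 0 - f (Fin.last l) := by
  have h := (Fin.sum_univ_succ f).symm.trans (Fin.sum_univ_castSucc f)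
  rw [Finset.sum_sub_distrib]
  linarith

/-- Hop-count bound for case (ii): for a `b`-monotonic path `x 0, …, x l` with
`b ≤ B`, nonnegative step values at least `r̄₊ > 0`, negative step values of
magnitude at most `r̄₋ ≥ 0`, and `x 0` and `q` lying in a set of diameter at
most `R̄_j`, with `Δ = ‖q - x l‖`, the number of hops satisfies
`l ≤ (R̄_j + Δ)/r̄₊ + B·(1 + r̄₋/r̄₊)`. -/
theorem b_monotonic_hop_bound_case_ii
    {d l b : ℕ} (B : ℕ)
    (x : Fin (l + 1) → EuclideanSpace ℝ (Fin d))
    (r : Fin l → ℝ)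
    (hr : ∀ i : Fin l,
      r i = ‖x i.castSucc - x (Fin.last l)‖ - ‖x i.succ - x (Fin.last l)‖)
    (hb : (Finset.univ.filter (fun i : Fin l => r i < 0)).card = b)
    (hbB : b ≤ B)
    (rp rm : ℝ) (hrp : 0 < rp) (hrm : 0 ≤ rm)
    (hplus : ∀ i : Fin l, 0 ≤ r i → rp ≤ r i)
    (hminus : ∀ i : Fin l, r i < 0 → |r i| ≤ rm)
    (S : Set (EuclideanSpace ℝ (Fin d))) (Rj : ℝ)
    (hdiam : ∀ y ∈ S, ∀ z ∈ S, ‖y - z‖ ≤ Rj)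
    (q : EuclideanSpace ℝ (Fin d)) (hx0S : x 0 ∈ S) (hqS : q ∈ S) :
    (l : ℝ) ≤ (Rj + ‖q - x (Fin.last l)‖) / rp + (B : ℝ) * (1 + rm / rp) := by
  have hsum : ∑ i, r i = ‖x 0 - x (Fin.last l)‖ := by
    simp_rw [hr]
    rw [sum_fin_castSucc_sub_succ l (fun i => ‖x i - x (Fin.last l)‖)]
    simp
  have htri : ‖x 0 - x (Fin.last l)‖ ≤ Rj + ‖q - x (Fin.last l)‖ :=
    (norm_sub_le_norm_sub_add_norm_sub _ q _).trans (by gcongr; exact hdiam _ hx0S _ hqS)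
  have hstep : ∀ i, rp - (if r i < 0 then rp + rm else 0) ≤ r i := by
    intro i
    split_ifs with h
    · linarith [neg_abs_le (r i), hminus i h]
    · linarith [hplus i (not_lt.mp h)]
  have hlow : (l : ℝ) * rp - b * (rp + rm) ≤ ∑ i, r i := by
    refine le_trans (le_of_eq ?_) (Finset.sum_le_sum fun i _ => hstep i)
    rw [Finset.sum_sub_distrib, ← Finset.sum_filter, Finset.sum_const, Finset.sum_const, hb]
    simp [mul_add]
  have hbB' : (b : ℝ) * (rp + rm) ≤ B * (rp + rm) := by gcongr
  have hkey : (l : ℝ) * rp ≤ Rj + ‖q - x (Fin.last l)‖ + B * (rp + rm) := by linarith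
  calc (l : ℝ) ≤ (Rj + ‖q - x (Fin.last l)‖ + B * (rp + rm)) / rp := (le_div_iff₀ hrp).mpr hkey
    _ = _ := by field_simp
end
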